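/- Suppose the error grid functions e^n : ℤ → ℝ satisfy e^0_j = 0 for all j, e^n_j = 0 for |j| ≥ J and all n, and for every n ≥ 0 and every j with |j| < J the recursion e^{n+1}_j = e^n_j − Δt ε C_α ζ(α−1) h^{−α}(e^n_{j−1} − 2e^n_j + e^n_{j+1}) + Δt ε C_α h Σ''_{k=−J−j, k≠0}^{J−j} (e^n_{j+k} − e^n_j)/|kh|^{1+α} − Δt T^n_j, where the truncation errors satisfy |T^n_j| ≤ T̄ for all n and all |j| < J. If the CFL-type condition Δt/h^α ≤ 1/(2 ε C_α (1 + 1/α − ζ(α−1))) holds, then for every n ≥ 0 and every j ∈ ℤ, |e^n_j| ≤ n · Δt · T̄. -/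

import Mathlib

open scoped BigOperators

/-- The constant `C_α = α Γ((1+α)/2) / (2^{1-α} √π Γ(1-α/2))`. -/
noncomputable def Cconst (α : ℝ) : ℝ :=
  α * Real.Gamma ((1 + α) / 2) /
    ((2 : ℝ) ^ (1 - α) * Real.sqrt Real.pi * Real.Gamma (1 - α / 2))

/-- The real value of the Riemann zeta function at a real argument. -/
noncomputable def zetaR (s : ℝ) : ℝ := (riemannZeta (s : ℂ)).re

/-- The double-primed sum `Σ''_{k=a, k≠0}^{b} g(k)`: the sum over integers `a ≤ k ≤ b`,
omitting `k = 0`, where the end terms `k = a` and `k = b` carry weight `1/2`. -/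
noncomputable def dsum (a b : ℤ) (g : ℤ → ℝ) : ℝ :=
  ∑ k ∈ (Finset.Icc a b).erase 0, (if k = a ∨ k = b then (1 : ℝ) / 2 else 1) * g k


section ZetaPart
open Complex Set MeasureTheory HurwitzZeta

lemma fmod_nonneg (x : ℝ) : ∃ r : ℝ, 0 ≤ r ∧ (hurwitzEvenFEPair 0).f_modif x = (r : ℂ) := by
  have key : ∀ t : ℝ, 0 < t → 1 ≤ cosKernel 0 t := by
    intro t ht
    have h := hasSum_nat_cosKernel₀ 0 ht
    have h2 := h.nonneg (fun n => by simp; positivity)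
    have : ((0:ℝ) : UnitAddCircle) = 0 := rfl
    rw [this] at h2
    linarith
  unfold WeakFEPair.f_modif
  rcases lt_or_ge 1 x with h1 | h1
  · refine ⟨evenKernel 0 x - 1, ?_, ?_⟩
    · rw [evenKernel_eq_cosKernel_of_zero]; linarith [key x (by linarith)]
    · have : x ∉ Ioo (0:ℝ) 1 := fun h => by linarith [h.2]
      simp [this, h1, hurwitzEvenFEPair]
  · have h1' : x ∉ Ioi (1:ℝ) := fun h => by have := mem_Ioi.1 h; linarith
    by_cases h : x ∈ Ioo (0:ℝ) 1
    · refine ⟨evenKernel 0 x - x ^ (-(1/2:ℝ)), ?_, ?_⟩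
      · rw [evenKernel_functional_equation, Real.rpow_neg h.1.le]
        have := key (1/x) (by have := h.1; positivity)
        have h3 : 0 < (x ^ (1/2:ℝ))⁻¹ := by have := Real.rpow_pos_of_pos h.1 (1/2); positivity
        rw [one_div (x ^ _)]
        nlinarith
      · simp only [Pi.add_apply, indicator_of_mem h, indicator_of_notMem h1']
        simp [hurwitzEvenFEPair]
    · exact ⟨0, le_rfl, by simp only [Pi.add_apply, indicator_of_notMem h, indicator_of_notMem h1']; simp⟩

noncomputable def fmr (x : ℝ) : ℝ := (fmod_nonneg x).choose
lemma fmr_nonneg (x : ℝ) : 0 ≤ fmr x := (fmod_nonneg x).choose_spec.1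
lemma fmr_eq (x : ℝ) : (hurwitzEvenFEPair 0).f_modif x = (fmr x : ℂ) := (fmod_nonneg x).choose_spec.2

lemma L0_int (s : ℝ) : IntegrableOn (fun x : ℝ => x ^ (s / 2 - 1) * fmr x) (Ioi 0) ∧
    (completedRiemannZeta₀ (s : ℂ)).re = (∫ x in Ioi (0:ℝ), x ^ (s / 2 - 1) * fmr x) / 2 := by
  have h := ((hurwitzEvenFEPair 0).isStrongFEPair_toStrongFEPair).hasMellin (s/2 : ℂ)
  have hc := h.1
  unfold MellinConvergent at hc
  have hEq : EqOn (fun t : ℝ => (t : ℂ) ^ ((s/2 : ℂ) - 1) • (hurwitzEvenFEPair 0).f_modif t)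
      (fun t : ℝ => ((t ^ (s / 2 - 1) * fmr t : ℝ) : ℂ)) (Ioi 0) := by
    intro t ht
    have ht' : 0 < t := ht
    simp only [fmr_eq, smul_eq_mul]
    push_cast [ofReal_cpow ht'.le]
    rfl
  have hi : IntegrableOn (fun t : ℝ => ((t ^ (s / 2 - 1) * fmr t : ℝ) : ℂ)) (Ioi 0) :=
    IntegrableOn.congr_fun hc hEq measurableSet_Ioi
  refine ⟨by simpa [IntegrableOn] using hi.re, ?_⟩
  have : completedRiemannZeta₀ (s:ℂ) = (∫ t in Ioi (0:ℝ), (t : ℂ) ^ ((s/2 : ℂ) - 1) • (hurwitzEvenFEPair 0).f_modif t) / 2 := rfl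
  rw [this, setIntegral_congr_fun measurableSet_Ioi hEq, integral_complex_ofReal]
  norm_cast

lemma L0_nonneg (s : ℝ) : 0 ≤ (completedRiemannZeta₀ (s : ℂ)).re := by
  rw [(L0_int s).2]
  have : 0 ≤ ∫ x in Ioi (0:ℝ), x ^ (s / 2 - 1) * fmr x :=
    setIntegral_nonneg measurableSet_Ioi fun x hx =>
      mul_nonneg (Real.rpow_nonneg (le_of_lt hx) _) (fmr_nonneg x)
  linarith

lemma L0_one : (completedRiemannZeta₀ ((1:ℝ) : ℂ)).re ≤ 1 := by
  have h : completedRiemannZeta₀ ((1:ℝ) : ℂ) =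
      (((Real.eulerMascheroniConstant - Real.log (4 * Real.pi)) / 2 + 1 : ℝ) : ℂ) := by
    have := completedRiemannZeta₀_one
    push_cast [ofReal_log (show (0:ℝ) ≤ 4 * Real.pi by positivity)]
    exact this
  rw [h, ofReal_re]
  have h1 := Real.eulerMascheroniConstant_lt_two_thirds
  have h2 : 1 ≤ Real.log (4 * Real.pi) := by
    rw [Real.le_log_iff_exp_le (by positivity)]
    have := Real.exp_one_lt_d9
    have := Real.pi_gt_three
    linarith
  linarith

lemma L0_le (s : ℝ) (h0 : 0 ≤ s) (h1 : s ≤ 1) : (completedRiemannZeta₀ (s : ℂ)).re ≤ 1 := by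
  have hz : (completedRiemannZeta₀ ((0:ℝ) : ℂ)).re ≤ 1 := by
    have := completedRiemannZeta₀_one_sub 0
    have h := L0_one
    simp only [sub_zero, ofReal_one, ofReal_zero] at *
    rw [← this]; exact h
  have ho := L0_one
  rw [(L0_int _).2] at hz ho ⊢
  have hle : ∫ x in Ioi (0:ℝ), x ^ (s / 2 - 1) * fmr x ≤
      ∫ x in Ioi (0:ℝ), ((1 - s) * (x ^ ((0:ℝ) / 2 - 1) * fmr x) + s * (x ^ ((1:ℝ) / 2 - 1) * fmr x)) := by
    refine setIntegral_mono_on (L0_int s).1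
      (((L0_int 0).1.const_mul _).add ((L0_int 1).1.const_mul _)) measurableSet_Ioi ?_
    intro x hx
    have hx' : 0 < x := hx
    have := Real.geom_mean_le_arith_mean2_weighted (sub_nonneg.2 h1) h0
      (Real.rpow_nonneg hx'.le ((0:ℝ) / 2 - 1)) (Real.rpow_nonneg hx'.le ((1:ℝ) / 2 - 1)) (by ring)
    rw [← Real.rpow_mul hx'.le, ← Real.rpow_mul hx'.le, ← Real.rpow_add hx'] at this
    have e : ((0:ℝ) / 2 - 1) * (1 - s) + ((1:ℝ) / 2 - 1) * s = s / 2 - 1 := by ring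
    rw [e] at this
    have := mul_le_mul_of_nonneg_right this (fmr_nonneg x)
    linarith
  rw [integral_add ((L0_int 0).1.const_mul _) ((L0_int 1).1.const_mul _),
    integral_const_mul, integral_const_mul] at hle
  nlinarith

lemma zeta_neg (s : ℝ) (h0 : -1 < s) (h1 : s < 1) : (riemannZeta (s : ℂ)).re ≤ 0 := by
  rw [riemannZeta_eq_mul_completedRiemannZeta₀]
  have hd : (2 * (Real.pi : ℂ) ^ (-(s:ℂ) / 2) * Gamma ((s:ℂ) / 2 + 1)) =
      ((2 * Real.pi ^ (-s / 2) * Real.Gamma (s / 2 + 1) : ℝ) : ℂ) := by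
    push_cast [ofReal_cpow Real.pi_pos.le, ← Complex.Gamma_ofReal]
    rfl
  rw [hd, div_ofReal_re]
  have hG : 0 < Real.Gamma (s / 2 + 1) := Real.Gamma_pos_of_pos (by linarith)
  have hp : 0 < Real.pi ^ (-s / 2) := Real.rpow_pos_of_pos Real.pi_pos _
  apply div_nonpos_of_nonpos_of_nonneg _ (by positivity)
  have e : ((s:ℂ) / (1 - (s:ℂ))) = ((s / (1 - s) : ℝ) : ℂ) := by push_cast; rfl
  rw [e, sub_re, sub_re, re_ofReal_mul, ofReal_re, one_re]
  have h2 : 0 < 1 - s := by linarith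
  have h3 : s / (1 - s) = 1 / (1 - s) - 1 := by field_simp; ring
  have h4 : 0 < 1 / (1 - s) := by positivity
  have := L0_nonneg s
  rcases le_or_gt s 0 with hs | hs
  · nlinarith
  · have := L0_le s hs.le h1.le
    have : 0 < s / (1 - s) := by positivity
    nlinarith
end ZetaPart

lemma step_bound (α : ℝ) (hα : 0 < α) (N : ℕ) (hN : 1 ≤ N) :
    α / ((N + 1 : ℕ) : ℝ) ^ (1 + α) ≤ (N : ℝ) ^ (-α) - ((N + 1 : ℕ) : ℝ) ^ (-α) := by
  have hN' : (1:ℝ) ≤ N := by exact_mod_cast hN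
  push_cast
  set x : ℝ := (N : ℝ) + 1 with hx
  have hx0 : 0 < x := by linarith
  have hNx : (N : ℝ) = x * (1 + -(1 / x)) := by field_simp; linarith
  have h1 : 0 < 1 + -(1 / x) := by
    have : 1 / x < 1 := by rw [div_lt_one hx0]; linarith
    linarith
  have hb : 1 + α / x ≤ (1 + -(1 / x)) ^ (-α) := by
    have h2 := Real.add_one_le_exp (α / x)
    have h3 := Real.log_le_sub_one_of_pos h1
    rw [Real.rpow_def_of_pos h1]
    have : α / x ≤ Real.log (1 + -(1 / x)) * -α := by
      have : α / x = α * (1 / x) := by ring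
      nlinarith
    have := Real.exp_le_exp.2 this
    linarith
  have hxp : 0 < x ^ (-α) := Real.rpow_pos_of_pos hx0 _
  rw [hNx, Real.mul_rpow hx0.le h1.le]
  have e : α / x ^ (1 + α) = x ^ (-α) * (α / x) := by
    rw [Real.rpow_add hx0, Real.rpow_one, Real.rpow_neg hx0.le]
    have := Real.rpow_pos_of_pos hx0 α
    field_simp
  rw [e]
  nlinarith

lemma half_sum (α : ℝ) (hα : 0 < α) (N : ℕ) :
    ∑ k ∈ Finset.Icc 1 N, 1 / (k : ℝ) ^ (1 + α) ≤ 1 + 1 / α := by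
  have key : ∀ N : ℕ, ∑ k ∈ Finset.Icc 1 (N + 1), 1 / (k : ℝ) ^ (1 + α)
      ≤ 1 + 1 / α - 1 / α * ((N + 1 : ℕ) : ℝ) ^ (-α) := by
    intro N
    induction N with
    | zero => simp
    | succ n ih =>
      rw [Finset.sum_Icc_succ_top (by omega)]
      have h := step_bound α hα (n + 1) (by omega)
      have h2 : 1 / ((n + 1 + 1 : ℕ) : ℝ) ^ (1 + α) = 1 / α * (α / ((n + 1 + 1 : ℕ) : ℝ) ^ (1 + α)) := by
        field_simp
      have h3 : 0 < 1 / α := by positivity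
      have := mul_le_mul_of_nonneg_left h h3.le
      rw [h2]
      linarith
  rcases N with _ | N
  · simp; positivity
  · refine (key N).trans ?_
    have : 0 ≤ 1 / α * ((N + 1 : ℕ) : ℝ) ^ (-α) := by positivity
    linarith

lemma full_sum (α : ℝ) (hα : 0 < α) (a b : ℤ) :
    ∑ k ∈ (Finset.Icc a b).erase 0, 1 / |(k : ℝ)| ^ (1 + α) ≤ 2 * (1 + 1 / α) := by
  set N : ℕ := a.natAbs + b.natAbs with hN
  have hsub : (Finset.Icc a b).erase 0 ⊆
      (Finset.Icc 1 N).image (fun n : ℕ => (n : ℤ)) ∪ (Finset.Icc 1 N).image (fun n : ℕ => -(n : ℤ)) := by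
    intro k hk
    simp only [Finset.mem_erase, Finset.mem_Icc, Finset.mem_union, Finset.mem_image] at *
    rcases lt_or_ge k 0 with h | h
    · exact Or.inr ⟨k.natAbs, by omega, by omega⟩
    · exact Or.inl ⟨k.natAbs, by omega, by omega⟩
  refine (Finset.sum_le_sum_of_subset_of_nonneg hsub fun k _ _ => by positivity).trans ?_
  rw [Finset.sum_union, Finset.sum_image (by intro a _ b _; simp), Finset.sum_image (by intro a _ b _; simp)]
  · have := half_sum α hα N
    have e : ∀ n : ℕ, |(n : ℝ)| = n := fun n => abs_of_nonneg (Nat.cast_nonneg n)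
    simp only [Int.cast_neg, Int.cast_natCast, abs_neg, e]
    linarith
  · rw [Finset.disjoint_left]
    intro k hk hk'
    simp only [Finset.mem_image, Finset.mem_Icc] at hk hk'
    obtain ⟨x, hx, rfl⟩ := hk
    obtain ⟨y, hy, h⟩ := hk'
    omega

lemma Cconst_pos (α : ℝ) (hα : 0 < α) (hα2 : α < 2) : 0 < Cconst α := by
  unfold Cconst
  have h1 : 0 < Real.Gamma ((1 + α) / 2) := Real.Gamma_pos_of_pos (by linarith)
  have h2 : 0 < Real.Gamma (1 - α / 2) := Real.Gamma_pos_of_pos (by linarith)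
  have h3 : 0 < (2:ℝ) ^ (1 - α) := by positivity
  have h4 : 0 < Real.sqrt Real.pi := Real.sqrt_pos.2 Real.pi_pos
  positivity

/-- Error bound for the explicit Euler scheme with the natural condition:
the discretization error grows at most linearly, `|e^n_j| ≤ n Δt T̄`. -/
theorem stmt_4 (α ε h Δt Tbar : ℝ) (J : ℤ)
    (hα : 0 < α) (hα2 : α < 2) (hε : 0 < ε) (hJ : 1 ≤ J)
    (hh : 0 < h) (hΔt : 0 < Δt) (hTbar : 0 ≤ Tbar)
    (e : ℕ → ℤ → ℝ) (T : ℕ → ℤ → ℝ)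
    (hinit : ∀ j : ℤ, e 0 j = 0)
    (hbc : ∀ n : ℕ, ∀ j : ℤ, J ≤ |j| → e n j = 0)
    (hrec : ∀ n : ℕ, ∀ j : ℤ, |j| < J →
      e (n + 1) j =
        e n j
          - Δt * ε * Cconst α * zetaR (α - 1) * h ^ (-α) *
              (e n (j - 1) - 2 * e n j + e n (j + 1))
          + Δt * ε * Cconst α * h *
              dsum (-J - j) (J - j)
                (fun k => (e n (j + k) - e n j) / |(k : ℝ) * h| ^ (1 + α))
          - Δt * T n j)
    (hT : ∀ n : ℕ, ∀ j : ℤ, |j| < J → |T n j| ≤ Tbar)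
    (hCFL : Δt / h ^ α ≤ 1 / (2 * ε * Cconst α * (1 + 1 / α - zetaR (α - 1)))) :
    ∀ n : ℕ, ∀ j : ℤ, |e n j| ≤ (n : ℝ) * Δt * Tbar := by
  have hC := Cconst_pos α hα hα2
  have hz : zetaR (α - 1) ≤ 0 := zeta_neg (α - 1) (by linarith) (by linarith)
  set z := zetaR (α - 1) with hzdef
  set C := Cconst α with hCdef
  have hhα : 0 < h ^ α := Real.rpow_pos_of_pos hh α
  have hhn : h ^ (-α) = (h ^ α)⁻¹ := Real.rpow_neg hh.le α
  set A := Δt * ε * C * h ^ (-α) with hA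
  have hA0 : 0 < A := by rw [hA, hhn]; positivity
  have hα' : 0 < 1 / α := by positivity
  have hD : 0 < 1 + 1 / α - z := by linarith
  have hcfl : A * (2 * (1 + 1 / α - z)) ≤ 1 := by
    rw [le_div_iff₀ (by positivity)] at hCFL
    calc A * (2 * (1 + 1 / α - z)) = Δt / h ^ α * (2 * ε * C * (1 + 1 / α - z)) := by
          rw [hA, hhn]; ring
      _ ≤ 1 := hCFL
  intro n
  induction n with
  | zero => intro j; simp [hinit]
  | succ n ih =>
    intro j
    set M : ℝ := (n : ℝ) * Δt * Tbar with hM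
    have hM0 : 0 ≤ M := by positivity
    have hgoal : ((n + 1 : ℕ) : ℝ) * Δt * Tbar = M + Δt * Tbar := by rw [hM]; push_cast; ring
    rw [hgoal]
    rcases le_or_gt J |j| with hj | hj
    · rw [hbc _ _ hj, abs_zero]; positivity
    rw [hrec n j hj]
    set I := (Finset.Icc (-J - j) (J - j)).erase 0 with hI
    set w : ℤ → ℝ := fun k => (if k = -J - j ∨ k = J - j then (1 : ℝ) / 2 else 1) *
      (1 / |(k : ℝ)| ^ (1 + α)) with hw
    have hw0 : ∀ k, 0 ≤ w k := fun k => by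
      simp only [hw]; split_ifs <;> positivity
    have hwle : ∀ k, w k ≤ 1 / |(k : ℝ)| ^ (1 + α) := fun k => by
      have : 0 ≤ 1 / |(k : ℝ)| ^ (1 + α) := by positivity
      simp only [hw]; split_ifs <;> linarith
    have hS : ∑ k ∈ I, w k ≤ 2 * (1 + 1 / α) :=
      (Finset.sum_le_sum fun k _ => hwle k).trans (full_sum α hα _ _)
    have hsum : h * dsum (-J - j) (J - j)
        (fun k => (e n (j + k) - e n j) / |(k : ℝ) * h| ^ (1 + α)) =
        h ^ (-α) * (∑ k ∈ I, w k * e n (j + k) - (∑ k ∈ I, w k) * e n j) := by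
      unfold dsum
      rw [Finset.sum_mul, ← Finset.sum_sub_distrib, Finset.mul_sum, Finset.mul_sum]
      refine Finset.sum_congr rfl fun k hk => ?_
      have hk0 : k ≠ 0 := (Finset.mem_erase.1 hk).1
      have hk1 : 0 < |(k : ℝ)| := abs_pos.2 (by exact_mod_cast hk0)
      have hk2 : 0 < |(k : ℝ)| ^ (1 + α) := Real.rpow_pos_of_pos hk1 _
      beta_reduce
      rw [abs_mul, abs_of_pos hh, Real.mul_rpow hk1.le hh.le, Real.rpow_add hh, Real.rpow_one, hhn]
      simp only [hw]
      field_simp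
    have hB : |∑ k ∈ I, w k * e n (j + k)| ≤ (∑ k ∈ I, w k) * M := by
      rw [Finset.sum_mul]
      refine (Finset.abs_sum_le_sum_abs _ _).trans (Finset.sum_le_sum fun k _ => ?_)
      rw [abs_mul, abs_of_nonneg (hw0 k)]
      exact mul_le_mul_of_nonneg_left (ih _) (hw0 k)
    set S := ∑ k ∈ I, w k with hSdef
    set B := ∑ k ∈ I, w k * e n (j + k) with hBdef
    have hrw : e n j - Δt * ε * C * z * h ^ (-α) * (e n (j - 1) - 2 * e n j + e n (j + 1))
          + Δt * ε * C * h * dsum (-J - j) (J - j)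
                (fun k => (e n (j + k) - e n j) / |(k : ℝ) * h| ^ (1 + α)) - Δt * T n j
        = (1 + 2 * A * z - A * S) * e n j + A * (-z) * e n (j - 1) + A * (-z) * e n (j + 1)
          + A * B - Δt * T n j := by
      rw [mul_assoc (Δt * ε * C) h, hsum, hA]; ring
    rw [hrw]
    have hc0 : 0 ≤ 1 + 2 * A * z - A * S := by
      have := mul_le_mul_of_nonneg_left hS hA0.le
      linarith
    have hc1 : 0 ≤ A * (-z) := mul_nonneg hA0.le (by linarith)
    have b0 := mul_le_mul_of_nonneg_left (ih j) hc0
    have b1 := mul_le_mul_of_nonneg_left (ih (j - 1)) hc1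
    have b2 := mul_le_mul_of_nonneg_left (ih (j + 1)) hc1
    have b3 := mul_le_mul_of_nonneg_left hB hA0.le
    have b4 := mul_le_mul_of_nonneg_left (hT n j hj) hΔt.le
    rw [← abs_of_nonneg hc0, ← abs_mul, abs_of_nonneg hc0] at b0
    rw [← abs_of_nonneg hc1, ← abs_mul, abs_of_nonneg hc1] at b1 b2
    rw [← abs_of_pos hA0, ← abs_mul, abs_of_pos hA0] at b3
    rw [← abs_of_pos hΔt, ← abs_mul, abs_of_pos hΔt] at b4
    rw [abs_le] at b0 b1 b2 b3 b4 ⊢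
    constructor <;> linarith [b0.1, b0.2, b1.1, b1.2, b2.1, b2.2, b3.1, b3.2, b4.1, b4.2]
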